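/- Amplitude estimation error for the quadratic method. Let m ≥ s ≥ 1 and β > 1, and suppose x = {x_1,…,x_s} ⊂ 𝕋 and x̂ = {x̂_1,…,x̂_s} ⊂ 𝕋 are sets of cardinality s with Δ(x) ≥ 2πβ/m and Δ(x̂) ≥ 2πβ/m. Let a ∈ (ℂ∖{0})^s, y the clean samples of (x,a), η ∈ ℂ^{2m−1}, T̃ := T(y+η), Φ̂ := Φ(m,x̂), and â := diag(Φ̂⁺ T̃ (Φ̂⁺)^*). Then max_{j=1,…,s} |a_j − â_j| ≤ C(β)·√s·a_max·m·max_{j=1,…,s} |x_j − x̂_j| + (β/(β−1))·‖T(η)‖_2/m, where C(β) := (1/√3)·(1 + √((β+1)/(β−1)))·√((β+1)/β)·(β/(β−1)) and a_max := max_j |a_j|. -/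

import Mathlib

open scoped Real BigOperators Matrix
open Matrix

noncomputable section

/-- Distance on the torus `ℝ/2πℤ` between (representatives of) two points. -/
def torusDist (u v : ℝ) : ℝ := ⨅ n : ℤ, |u - v + 2 * Real.pi * n|

/-- The nonharmonic Fourier matrix `Φ(n, x) = (e^{i k x_j})_{k ∈ I(n), j}`,
where `I(n) = {-(n-1)/2, …, (n-1)/2}`. -/
def fourierMatrix (n : ℕ) {s : ℕ} (x : Fin s → ℝ) : Matrix (Fin n) (Fin s) ℂ :=
  fun k j => Complex.exp (Complex.I * (((((k : ℕ) : ℝ) - ((n : ℝ) - 1) / 2) * x j : ℝ) : ℂ))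

/-- Spectral norm (ℓ² → ℓ² operator norm) of a complex matrix. -/
def specNorm {d e : ℕ} (M : Matrix (Fin d) (Fin e) ℂ) : ℝ :=
  ‖LinearMap.toContinuousLinearMap (Matrix.toEuclideanLin M)‖

/-- The Toeplitz matrix `T(y)` of `y ∈ ℂ^{2m-1}` (indexed by `{-(m-1),…,m-1}`,
realized as `Fin (2m-1)` via the shift `k ↦ k + (m-1)`), with entries `T(y)_{j,k} = y_{j-k}`. -/
def toeplitz (m : ℕ) (y : Fin (2 * m - 1) → ℂ) : Matrix (Fin m) (Fin m) ℂ :=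
  fun j k => y ⟨(j : ℕ) + (m - 1) - (k : ℕ), by
    have hj := j.isLt; have hk := k.isLt; omega⟩

/-- Clean samples `y_k = Σ_j a_j e^{i k x_j}` for `k ∈ {-(m-1),…,m-1}`,
realized as a vector in `ℂ^{2m-1}` via the shift `k ↦ k + (m-1)`. -/
def cleanSamples (m : ℕ) {s : ℕ} (x : Fin s → ℝ) (a : Fin s → ℂ) :
    Fin (2 * m - 1) → ℂ :=
  fun k => ∑ j, a j *
    Complex.exp (Complex.I * (((((k : ℕ) : ℝ) - ((m : ℝ) - 1)) * x j : ℝ) : ℂ))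


lemma cos_le_quartic {x : ℝ} (hx : 0 ≤ x) : Real.cos x ≤ 1 - x ^ 2 / 2 + x ^ 4 / 24 := by
  have hd : ∀ y : ℝ, HasDerivAt (fun t : ℝ => 1 - t ^ 2 / 2 + t ^ 4 / 24 - Real.cos t)
      (Real.sin y - (y - y ^ 3 / 6)) y := by
    intro y
    have h := ((((hasDerivAt_const y (1:ℝ)).sub ((hasDerivAt_pow 2 y).div_const 2)).add
      ((hasDerivAt_pow 4 y).div_const 24)).sub (Real.hasDerivAt_cos y))
    have e : Real.sin y - (y - y ^ 3 / 6) = 0 - ((2 : ℕ) : ℝ) * y ^ (2 - 1) / 2 +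
        ((4 : ℕ) : ℝ) * y ^ (4 - 1) / 24 - -Real.sin y := by
      norm_num
      ring
    rw [e]
    exact h
  have hm : MonotoneOn (fun t : ℝ => 1 - t ^ 2 / 2 + t ^ 4 / 24 - Real.cos t) (Set.Ici 0) := by
    apply monotoneOn_of_deriv_nonneg (convex_Ici 0)
    · exact fun y _ => (hd y).continuousAt.continuousWithinAt
    · exact fun y _ => (hd y).differentiableAt.differentiableWithinAt
    · intro y hy
      rw [interior_Ici] at hy
      rw [(hd y).deriv]
      have := Real.sin_ge_sub_cube (le_of_lt hy)
      linarith
  have := hm (Set.mem_Ici.2 le_rfl) (Set.mem_Ici.2 hx) hx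
  simp at this
  linarith

lemma trig_key {y : ℝ} (hy : |y| ≤ π / 2) :
    y ^ 2 * (1 + 2 * |Real.cos y|) ≤ 3 * Real.sin y ^ 2 := by
  wlog h0 : 0 ≤ y generalizing y
  · have := @this (-y) (by simpa using hy) (by linarith)
    simpa using this
  rw [abs_of_nonneg h0] at hy
  have hc : 0 ≤ Real.cos y := Real.cos_nonneg_of_neg_pi_div_two_le_of_le (by linarith [Real.pi_pos]) hy
  rw [abs_of_nonneg hc]
  have h1 := cos_le_quartic h0
  have h2 := Real.sin_ge_sub_cube h0
  have h3 : 0 ≤ y - y ^ 3 / 6 := by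
    have : y ^ 2 ≤ 6 := by nlinarith [Real.pi_lt_four]
    nlinarith
  have h4 : (y - y ^ 3 / 6) ^ 2 ≤ Real.sin y ^ 2 := pow_le_pow_left₀ h3 h2 2
  nlinarith [mul_le_mul_of_nonneg_left h1 (sq_nonneg y)]

lemma sum_int_le (S : Finset ℤ) : ∑ n ∈ S, 1 / (n : ℝ) ^ 2 ≤ π ^ 2 / 3 := by
  have h : HasSum (fun n : ℤ => 1 / (n : ℝ) ^ 2) (π ^ 2 / 3) := by
    have := HasSum.of_nat_of_neg (f := fun n : ℤ => 1 / (n : ℝ) ^ 2) (g := π ^ 2 / 6)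
      (g' := π ^ 2 / 6) (by simpa using hasSum_zeta_two) (by simpa using hasSum_zeta_two)
    have e : π ^ 2 / 3 = π ^ 2 / 6 + π ^ 2 / 6 - 1 / ((0 : ℤ) : ℝ) ^ 2 := by
      simp; ring
    rw [e]
    exact this
  exact sum_le_hasSum S (fun i _ => by positivity) h

lemma kernel_sum {s : ℕ} (z : Fin s → ℝ) (c : ℝ) (hc : 0 < c)
    (hz : ∀ j k : Fin s, j ≠ k → ∀ n : ℤ, c ≤ |z j - z k + π * n|) (r : Fin s) :
    ∑ t, (1 + 2 * |Real.cos (z r - z t)|) * ((Real.sin (z r - z t))⁻¹) ^ 2 ≤ (π / c) ^ 2 := by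
  classical
  have hpi := Real.pi_pos
  set N : Fin s → ℤ := fun t => -round ((z r - z t) / π) with hN
  set y : Fin s → ℝ := fun t => z r - z t + π * N t with hy
  have hyb : ∀ t, |y t| ≤ π / 2 := by
    intro t
    have := abs_sub_round ((z r - z t) / π)
    have e : y t = π * ((z r - z t) / π - round ((z r - z t) / π)) := by
      simp only [hy, hN]; push_cast; field_simp; ring
    rw [e, abs_mul, abs_of_pos hpi]
    nlinarith
  have hyc : ∀ t, t ≠ r → c ≤ |y t| := fun t ht => hz r t (Ne.symm ht) _
  have hsin : ∀ t, Real.sin (z r - z t) ^ 2 = Real.sin (y t) ^ 2 := by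
    intro t
    simp only [hy]
    rw [mul_comm π, Real.sin_add_int_mul_pi, mul_pow, ← sq_abs ((-1 : ℝ) ^ (N t))]
    simp
  have hcos : ∀ t, |Real.cos (z r - z t)| = |Real.cos (y t)| := by
    intro t
    simp only [hy]
    rw [mul_comm π, Real.cos_add_int_mul_pi, abs_mul]
    simp
  set F : Fin s → ℤ := fun t => if 0 < y t then ⌊y t / c⌋ else ⌈y t / c⌉ with hF
  have hFb : ∀ t, t ≠ r → (0:ℝ) < (F t : ℝ) ^ 2 ∧ c ^ 2 * (F t : ℝ) ^ 2 ≤ y t ^ 2 := by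
    intro t ht
    have h1 := hyc t ht
    by_cases hp : 0 < y t
    · rw [abs_of_pos hp] at h1
      have hFt : F t = ⌊y t / c⌋ := by simp [hF, hp]
      have h2 : 1 ≤ F t := by
        rw [hFt, Int.le_floor]; push_cast; rwa [le_div_iff₀ hc, one_mul]
      have h3 : (F t : ℝ) ≤ y t / c := by rw [hFt]; exact Int.floor_le _
      have h2' : (1:ℝ) ≤ F t := by exact_mod_cast h2
      rw [le_div_iff₀ hc] at h3
      refine ⟨by positivity, ?_⟩
      rw [← mul_pow]
      exact pow_le_pow_left₀ (by positivity) (by linarith) 2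
    · rw [abs_of_nonpos (not_lt.1 hp)] at h1
      have hFt : F t = ⌈y t / c⌉ := by simp [hF, hp]
      have h2 : F t ≤ -1 := by
        rw [hFt, Int.ceil_le]; push_cast; rw [div_le_iff₀ hc]; linarith
      have h3 : y t / c ≤ (F t : ℝ) := by rw [hFt]; exact Int.le_ceil _
      have h2' : (F t : ℝ) ≤ -1 := by exact_mod_cast h2
      rw [div_le_iff₀ hc] at h3
      refine ⟨by nlinarith, ?_⟩
      rw [← mul_pow, ← neg_sq, ← neg_sq (y t)]
      exact pow_le_pow_left₀ (by nlinarith) (by linarith) 2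
  have hFinj : Set.InjOn F (Finset.univ.erase r : Finset (Fin s)) := by
    intro t ht t' ht' hFF
    have htr : t ≠ r := by simpa using ht
    have htr' : t' ≠ r := by simpa using ht'
    by_contra hne
    have h1 := hz t' t (Ne.symm hne) (N t - N t')
    have e : z t' - z t + π * ((N t - N t' : ℤ) : ℝ) = y t - y t' := by
      simp only [hy]; push_cast; ring
    rw [e] at h1
    have h2 := hyc t htr
    have h2' := hyc t' htr'
    have key : |y t / c - y t' / c| < 1 := by
      by_cases hp : 0 < y t <;> by_cases hp' : 0 < y t'
      · simp only [hF, hp, hp', if_true] at hFF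
        exact Int.abs_sub_lt_one_of_floor_eq_floor hFF
      · exfalso
        simp only [hF, hp, hp', if_true, if_false] at hFF
        rw [abs_of_pos hp] at h2
        have a1 : 1 ≤ ⌊y t / c⌋ := by
          rw [Int.le_floor]; push_cast; rwa [le_div_iff₀ hc, one_mul]
        have a2 : ⌈y t' / c⌉ ≤ 0 := by
          rw [Int.ceil_le]; push_cast; exact div_nonpos_of_nonpos_of_nonneg (not_lt.1 hp') hc.le
        omega
      · exfalso
        simp only [hF, hp, hp', if_true, if_false] at hFF
        rw [abs_of_pos hp'] at h2'
        have a1 : 1 ≤ ⌊y t' / c⌋ := by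
          rw [Int.le_floor]; push_cast; rwa [le_div_iff₀ hc, one_mul]
        have a2 : ⌈y t / c⌉ ≤ 0 := by
          rw [Int.ceil_le]; push_cast; exact div_nonpos_of_nonpos_of_nonneg (not_lt.1 hp) hc.le
        omega
      · simp only [hF, hp, hp', if_false] at hFF
        have a1 := Int.ceil_lt_add_one (y t / c)
        have a2 := Int.ceil_lt_add_one (y t' / c)
        have a3 := Int.le_ceil (y t / c)
        have a4 := Int.le_ceil (y t' / c)
        rw [hFF] at a1 a3
        rw [abs_lt]; constructor <;> linarith
    rw [← sub_div, abs_div, abs_of_pos hc, div_lt_one hc] at key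
    linarith
  have hterm : ∀ t ∈ Finset.univ.erase r,
      (1 + 2 * |Real.cos (z r - z t)|) * ((Real.sin (z r - z t))⁻¹) ^ 2
        ≤ (3 / c ^ 2) * (1 / (F t : ℝ) ^ 2) := by
    intro t ht
    have htr : t ≠ r := by simpa using ht
    obtain ⟨f1, f2⟩ := hFb t htr
    have k := trig_key (hyb t)
    rw [inv_pow, hsin, hcos]
    have hy2 : 0 < y t ^ 2 := by have := hyc t htr; nlinarith [sq_abs (y t)]
    have hs2 : 0 < Real.sin (y t) ^ 2 := by
      have := abs_nonneg (Real.cos (y t))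
      nlinarith
    calc (1 + 2 * |Real.cos (y t)|) * (Real.sin (y t) ^ 2)⁻¹ ≤ 3 / y t ^ 2 := by
          rw [← div_eq_mul_inv, div_le_div_iff₀ hs2 hy2]; linarith
      _ ≤ 3 / (c ^ 2 * (F t : ℝ) ^ 2) := by gcongr
      _ = _ := by field_simp
  rw [← Finset.add_sum_erase _ _ (Finset.mem_univ r)]
  simp only [sub_self, Real.sin_zero, _root_.inv_zero]
  calc _ ≤ ∑ t ∈ Finset.univ.erase r, (3 / c ^ 2) * (1 / (F t : ℝ) ^ 2) := by
        have := Finset.sum_le_sum hterm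
        simpa using this
    _ = (3 / c ^ 2) * ∑ n ∈ (Finset.univ.erase r).image F, 1 / (n : ℝ) ^ 2 := by
        rw [Finset.sum_image hFinj, Finset.mul_sum]
    _ ≤ (3 / c ^ 2) * (π ^ 2 / 3) := by gcongr; exact sum_int_le _
    _ = _ := by field_simp

/-- The kernel `csc (z_j - z_k)`, zero on the diagonal. -/
def cscK {s : ℕ} (z : Fin s → ℝ) (j k : Fin s) : ℝ := (Real.sin (z j - z k))⁻¹

/-- The kernel `cot (z_j - z_k)`, zero on the diagonal. -/
def cotK {s : ℕ} (z : Fin s → ℝ) (j k : Fin s) : ℝ :=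
  Real.cos (z j - z k) * (Real.sin (z j - z k))⁻¹

lemma cscK_self {s : ℕ} (z : Fin s → ℝ) (j : Fin s) : cscK z j j = 0 := by simp [cscK]
lemma cotK_self {s : ℕ} (z : Fin s → ℝ) (j : Fin s) : cotK z j j = 0 := by simp [cotK]
lemma cscK_anti {s : ℕ} (z : Fin s → ℝ) (j k : Fin s) : cscK z j k = - cscK z k j := by
  unfold cscK
  rw [← neg_sub (z k), Real.sin_neg, inv_neg]
lemma cotK_anti {s : ℕ} (z : Fin s → ℝ) (j k : Fin s) : cotK z j k = - cotK z k j := by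
  unfold cotK
  rw [← neg_sub (z k), Real.sin_neg, inv_neg, Real.cos_neg]; ring

lemma sin_ne_of_sep {s : ℕ} (z : Fin s → ℝ) (c : ℝ) (hc : 0 < c)
    (hz : ∀ j k : Fin s, j ≠ k → ∀ n : ℤ, c ≤ |z j - z k + π * n|) {j k : Fin s} (h : j ≠ k) :
    Real.sin (z j - z k) ≠ 0 := by
  intro h0
  obtain ⟨n, hn⟩ := Real.sin_eq_zero_iff.1 h0
  have := hz j k h (-n)
  rw [← hn] at this
  push_cast at this
  rw [show (n : ℝ) * π + π * -n = 0 by ring, abs_zero] at this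
  linarith

lemma kernel_identity {s : ℕ} (z : Fin s → ℝ) (hz : ∀ j k : Fin s, j ≠ k → Real.sin (z j - z k) ≠ 0)
    (r t q : Fin s) :
    cscK z r q * cscK z t q = cscK z r t * (cotK z t q - cotK z r q)
      + (if q = r then cscK z r t * cotK z r t else 0)
      + (if q = t then cscK z r t * cotK z r t else 0)
      + (if r = t then cscK z r q ^ 2 else 0) := by
  by_cases hrt : r = t
  · subst hrt; simp [cscK_self]; ring
  by_cases hqr : q = r
  · subst hqr
    simp [cscK_self, cotK_self, hrt]
    rw [cotK_anti z t q]; ring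
  by_cases hqt : q = t
  · subst hqt
    simp [cscK_self, cotK_self, hrt, hqr]
  simp only [hrt, hqr, hqt, if_false, add_zero]
  have h1 := hz r q (Ne.symm hqr)
  have h2 := hz t q (Ne.symm hqt)
  have h3 := hz r t hrt
  unfold cscK cotK
  field_simp
  rw [show z r - z t = (z r - z q) - (z t - z q) by ring, Real.sin_sub]
  ring

lemma kernel_identity_sum {s : ℕ} (z : Fin s → ℝ)
    (hz : ∀ j k : Fin s, j ≠ k → Real.sin (z j - z k) ≠ 0) (r t : Fin s) :
    ∑ q, cscK z r q * cscK z t q = cscK z r t * ((∑ q, cotK z t q) - (∑ q, cotK z r q))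
      + 2 * (cscK z r t * cotK z r t)
      + (if r = t then ∑ q, cscK z r q ^ 2 else 0) := by
  simp_rw [kernel_identity z hz r t]
  rw [Finset.sum_add_distrib, Finset.sum_add_distrib, Finset.sum_add_distrib, ← Finset.mul_sum,
    Finset.sum_sub_distrib]
  simp only [Finset.sum_ite_eq', Finset.mem_univ, if_true]
  split_ifs <;> simp <;> ring

lemma eig_bound {s : ℕ} (z : Fin s → ℝ) (c : ℝ) (hc : 0 < c)
    (hz : ∀ j k : Fin s, j ≠ k → ∀ n : ℤ, c ≤ |z j - z k + π * n|)
    (u : Fin s → ℂ) (hu : u ≠ 0) (μ : ℝ)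
    (hev : ∀ q, ∑ r, u r * (cscK z r q : ℂ) = Complex.I * μ * u q) :
    |μ| ≤ π / c := by
  have hsin := fun j k (h : j ≠ k) => sin_ne_of_sep z c hc hz h
  set S : ℝ := ∑ q, ‖u q‖ ^ 2 with hS
  have hSpos : 0 < S := by
    obtain ⟨i, hi⟩ := Function.ne_iff.1 hu
    apply Finset.sum_pos' (fun _ _ => by positivity) ⟨i, Finset.mem_univ _, ?_⟩
    have : 0 < ‖u i‖ := norm_pos_iff.2 hi
    positivity
  let C : Fin s → ℝ := fun t => ∑ q, cotK z t q
  -- expand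
  have hmain : ((μ ^ 2 * S : ℝ) : ℂ) = ∑ r, ∑ t, u r * star (u t) *
      ((2 * (cscK z r t * cotK z r t) + (if r = t then ∑ q, cscK z r q ^ 2 else 0) : ℝ) : ℂ) := by
    have h1 : ((μ ^ 2 * S : ℝ) : ℂ) = ∑ q, (∑ r, u r * (cscK z r q : ℂ)) *
        star (∑ t, u t * (cscK z t q : ℂ)) := by
      simp_rw [hev]
      rw [hS]; push_cast
      rw [Finset.mul_sum]
      refine Finset.sum_congr rfl fun q _ => ?_
      rw [← Complex.mul_conj']
      simp
      linear_combination ((μ:ℂ)^2 * u q * (starRingEnd ℂ) (u q)) * Complex.I_sq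
    have h2 : ∑ q, (∑ r, u r * (cscK z r q : ℂ)) * star (∑ t, u t * (cscK z t q : ℂ))
        = ∑ r, ∑ t, u r * star (u t) * ((∑ q, cscK z r q * cscK z t q : ℝ) : ℂ) := by
      simp_rw [star_sum, Finset.sum_mul_sum]
      rw [Finset.sum_comm]
      refine Finset.sum_congr rfl fun r _ => ?_
      rw [Finset.sum_comm]
      refine Finset.sum_congr rfl fun t _ => ?_
      push_cast
      rw [Finset.mul_sum]
      refine Finset.sum_congr rfl fun q _ => ?_
      simp
      ring
    have h3 : ∑ r, ∑ t, u r * star (u t) * ((cscK z r t * (C t - C r) : ℝ) : ℂ) = 0 := by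
      have e1 : ∑ r, ∑ t, u r * star (u t) * ((cscK z r t * C t : ℝ) : ℂ)
          = ∑ t, Complex.I * μ * u t * star (u t) * (C t : ℂ) := by
        rw [Finset.sum_comm]
        refine Finset.sum_congr rfl fun t _ => ?_
        rw [← hev t, Finset.sum_mul, Finset.sum_mul]
        refine Finset.sum_congr rfl fun r _ => ?_
        push_cast; ring
      have e2 : ∑ r, ∑ t, u r * star (u t) * ((cscK z r t * C r : ℝ) : ℂ)
          = ∑ r, Complex.I * μ * u r * star (u r) * (C r : ℂ) := by
        refine Finset.sum_congr rfl fun r _ => ?_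
        have := congrArg star (hev r)
        rw [star_sum] at this
        have e3 : Complex.I * μ * star (u r) = ∑ t, star (u t) * (cscK z r t : ℂ) := by
          have e4 : star (Complex.I * μ * u r) = - (Complex.I * μ * star (u r)) := by
            simp
          rw [← neg_inj, ← e4, ← this, ← Finset.sum_neg_distrib]
          refine Finset.sum_congr rfl fun t _ => ?_
          rw [cscK_anti z r t]; simp
        rw [show Complex.I * μ * u r * star (u r) * (C r : ℂ)
          = u r * (C r : ℂ) * (Complex.I * μ * star (u r)) by ring, e3, Finset.mul_sum]
        refine Finset.sum_congr rfl fun t _ => ?_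
        push_cast; ring
      have e5 : ∀ r t, u r * star (u t) * ((cscK z r t * (C t - C r) : ℝ) : ℂ) =
          u r * star (u t) * ((cscK z r t * C t : ℝ) : ℂ)
            - u r * star (u t) * ((cscK z r t * C r : ℝ) : ℂ) := by
        intro r t; push_cast; ring
      simp_rw [e5, Finset.sum_sub_distrib]
      rw [e1, e2, sub_self]
    rw [h1, h2, ← sub_zero (∑ r, _), ← h3, ← Finset.sum_sub_distrib]
    refine Finset.sum_congr rfl fun r _ => ?_
    rw [← Finset.sum_sub_distrib]
    refine Finset.sum_congr rfl fun t _ => ?_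
    rw [kernel_identity_sum z hsin]
    simp only [C]
    rw [← mul_sub, ← Complex.ofReal_sub]
    congr 2
    ring
  -- bound
  have hb : μ ^ 2 * S ≤ ∑ r, ∑ t, ‖u r‖ * ‖u t‖ *
      (2 * |cscK z r t * cotK z r t| + (if r = t then ∑ q, cscK z r q ^ 2 else 0)) := by
    have h0 : μ ^ 2 * S = ‖((μ ^ 2 * S : ℝ) : ℂ)‖ := by
      rw [Complex.norm_real, Real.norm_eq_abs, abs_of_nonneg (by positivity)]
    rw [h0, hmain]
    refine (norm_sum_le _ _).trans (Finset.sum_le_sum fun r _ => ?_)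
    refine (norm_sum_le _ _).trans (Finset.sum_le_sum fun t _ => ?_)
    rw [norm_mul, norm_mul, norm_star, Complex.norm_real, Real.norm_eq_abs]
    gcongr
    refine (abs_add_le _ _).trans ?_
    rw [abs_mul 2, abs_two]
    gcongr
    split_ifs
    · rw [abs_of_nonneg (Finset.sum_nonneg fun _ _ => by positivity)]
    · simp
  have hb2 : ∑ r, ∑ t, ‖u r‖ * ‖u t‖ *
      (2 * |cscK z r t * cotK z r t| + (if r = t then ∑ q, cscK z r q ^ 2 else 0))
      ≤ ∑ r, ‖u r‖ ^ 2 * (∑ t, (2 * |cscK z r t * cotK z r t| + cscK z r t ^ 2)) := by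
    have e1 : ∀ r t, ‖u r‖ * ‖u t‖ *
      (2 * |cscK z r t * cotK z r t| + (if r = t then ∑ q, cscK z r q ^ 2 else 0)) ≤
      ‖u r‖ ^ 2 * |cscK z r t * cotK z r t| + ‖u t‖ ^ 2 * |cscK z t r * cotK z t r|
       + (if r = t then ‖u r‖ ^ 2 * ∑ q, cscK z r q ^ 2 else 0) := by
      intro r t
      have ea : |cscK z t r * cotK z t r| = |cscK z r t * cotK z r t| := by
        rw [cscK_anti z t r, cotK_anti z t r, neg_mul_neg]
      rw [ea]
      have := mul_nonneg (sq_nonneg (‖u r‖ - ‖u t‖)) (abs_nonneg (cscK z r t * cotK z r t))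
      split_ifs with h
      · subst h; nlinarith
      · nlinarith
    refine (Finset.sum_le_sum fun r _ => Finset.sum_le_sum fun t _ => e1 r t).trans ?_
    simp_rw [Finset.sum_add_distrib]
    rw [Finset.sum_comm (f := fun r t => ‖u t‖ ^ 2 * |cscK z t r * cotK z t r|)]
    simp only [Finset.sum_ite_eq, Finset.mem_univ, if_true, mul_add, Finset.sum_add_distrib,
      ← Finset.mul_sum]
    apply le_of_eq
    congr 1
    rw [← Finset.sum_add_distrib]
    refine Finset.sum_congr rfl fun r _ => ?_
    ring
  have hb3 : ∑ r, ‖u r‖ ^ 2 * (∑ t, (2 * |cscK z r t * cotK z r t| + cscK z r t ^ 2))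
      ≤ (π / c) ^ 2 * S := by
    rw [hS, Finset.mul_sum]
    refine Finset.sum_le_sum fun r _ => ?_
    rw [mul_comm]
    gcongr
    refine le_trans (le_of_eq ?_) (kernel_sum z c hc hz r)
    refine Finset.sum_congr rfl fun t _ => ?_
    unfold cscK cotK
    rw [show (Real.sin (z r - z t))⁻¹ * (Real.cos (z r - z t) * (Real.sin (z r - z t))⁻¹)
      = Real.cos (z r - z t) * ((Real.sin (z r - z t))⁻¹) ^ 2 by ring, abs_mul,
      abs_of_nonneg (sq_nonneg (Real.sin (z r - z t))⁻¹)]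
    ring
  have hfin : μ ^ 2 ≤ (π / c) ^ 2 := le_of_mul_le_mul_right (hb.trans (hb2.trans hb3)) hSpos
  exact abs_le_of_sq_le_sq hfin (by positivity)

open scoped ComplexOrder in
lemma hilbert_form {s : ℕ} (z : Fin s → ℝ) (c : ℝ) (hc : 0 < c)
    (hz : ∀ j k : Fin s, j ≠ k → ∀ n : ℤ, c ≤ |z j - z k + π * n|) (v : Fin s → ℂ) :
    |(Complex.I * ∑ j, ∑ k, v j * star (v k) * (cscK z j k : ℂ)).re|
      ≤ π / c * ∑ j, ‖v j‖ ^ 2 := by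
  -- one-sided version
  have key : ∀ σ : ℝ, |σ| = 1 →
      σ * (Complex.I * ∑ j, ∑ k, v j * star (v k) * (cscK z j k : ℂ)).re
        ≤ π / c * ∑ j, ‖v j‖ ^ 2 := by
    intro σ hσ
    let M : Matrix (Fin s) (Fin s) ℂ := fun k j =>
      (if k = j then ((π / c : ℝ) : ℂ) else 0) - σ * Complex.I * (cscK z j k : ℂ)
    have hM : M.IsHermitian := by
      ext k j
      rw [Matrix.conjTranspose_apply]
      simp only [M]
      rw [cscK_anti z k j]
      by_cases h : k = j
      · subst h; simp [cscK_self]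
      · simp [h, Ne.symm h]
    have hmv : ∀ (w : Fin s → ℂ) k, (M *ᵥ w) k = ((π / c : ℝ) : ℂ) * w k
        - σ * Complex.I * ∑ j, w j * (cscK z j k : ℂ) := by
      intro w k
      simp only [Matrix.mulVec, dotProduct, M, sub_mul, Finset.sum_sub_distrib, ite_mul, zero_mul,
        Finset.sum_ite_eq, Finset.mem_univ, if_true]
      rw [Finset.mul_sum]
      congr 1
      refine Finset.sum_congr rfl fun j _ => ?_
      ring
    have hpsd : M.PosSemidef := by
      rw [hM.posSemidef_iff_eigenvalues_nonneg]
      intro i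
      set w : Fin s → ℂ := (hM.eigenvectorBasis i).ofLp with hw
      have hw0 : w ≠ 0 := by
        intro h0
        have := hM.eigenvectorBasis.orthonormal.ne_zero i
        apply this
        ext k
        exact congrFun h0 k
      have hev := hM.mulVec_eigenvectorBasis i
      have hσ2 : (σ : ℂ) ^ 2 = 1 := by
        rw [← Complex.ofReal_pow, ← sq_abs, hσ]; simp
      have := eig_bound z c hc hz w hw0 (-(σ * (π / c - hM.eigenvalues i))) (by
        intro q
        have h1 := congrFun hev q
        rw [← hw, hmv] at h1
        simp only [Pi.smul_apply, Complex.real_smul] at h1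
        push_cast at h1 ⊢
        linear_combination (Complex.I * σ) * h1 + (- ∑ r, w r * (cscK z r q : ℂ)) * hσ2 +
          (σ ^ 2 * ∑ r, w r * (cscK z r q : ℂ)) * Complex.I_sq)
      rw [abs_neg, abs_mul, hσ, one_mul] at this
      have := (abs_le.1 this).2
      simp only [Pi.zero_apply]
      linarith
    have h := hpsd.re_dotProduct_nonneg v
    have e : star v ⬝ᵥ M *ᵥ v = ((π / c * ∑ j, ‖v j‖ ^ 2 : ℝ) : ℂ) -
        σ * (Complex.I * ∑ j, ∑ k, v j * star (v k) * (cscK z j k : ℂ)) := by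
      simp only [dotProduct, hmv, mul_sub, Finset.sum_sub_distrib]
      push_cast
      congr 1
      · rw [Finset.mul_sum]
        refine Finset.sum_congr rfl fun j _ => ?_
        rw [← Complex.mul_conj']
        simp; ring
      · rw [Finset.sum_comm, Finset.mul_sum, Finset.mul_sum]
        refine Finset.sum_congr rfl fun k _ => ?_
        simp_rw [Finset.mul_sum]
        refine Finset.sum_congr rfl fun j _ => ?_
        simp; ring
    rw [e] at h
    simp only [RCLike.re_to_complex, Complex.sub_re, Complex.ofReal_re, Complex.re_ofReal_mul] at h
    linarith
  rw [abs_le]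
  constructor
  · have := key (-1) (by simp); linarith
  · have := key 1 (by simp); linarith

lemma dirichlet_kernel (m : ℕ) (t : ℝ) :
    (∑ k : Fin m, Complex.exp (Complex.I * (((((k : ℕ) : ℝ) - ((m : ℝ) - 1) / 2) * t : ℝ) : ℂ)))
      * (Real.sin (t / 2) : ℂ) = (Real.sin (m * (t / 2)) : ℂ) := by
  rw [Fin.sum_univ_eq_sum_range
    (fun k : ℕ => Complex.exp (Complex.I * ((((k : ℝ) - ((m : ℝ) - 1) / 2) * t : ℝ) : ℂ)))]
  rw [Finset.sum_mul]
  let g : ℕ → ℂ := fun k => (-Complex.I / 2) * Complex.exp (Complex.I * (((k : ℝ) - (m : ℝ) / 2) * t : ℝ))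
  have h : ∀ k : ℕ, Complex.exp (Complex.I * ((((k : ℝ) - ((m : ℝ) - 1) / 2) * t : ℝ) : ℂ))
      * (Real.sin (t / 2) : ℂ) = g (k + 1) - g k := by
    intro k
    simp only [g]
    rw [Complex.ofReal_sin, Complex.sin]
    push_cast
    rw [show Complex.I * (((k : ℂ) + 1 - (m : ℂ) / 2) * t) =
      Complex.I * (((k : ℂ) - ((m : ℂ) - 1) / 2) * t) + (t : ℂ) / 2 * Complex.I by ring,
      show Complex.I * (((k : ℂ) - (m : ℂ) / 2) * t) =
      Complex.I * (((k : ℂ) - ((m : ℂ) - 1) / 2) * t) + -((t : ℂ) / 2) * Complex.I by ring,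
      Complex.exp_add, Complex.exp_add]
    ring
  rw [Finset.sum_congr rfl fun k _ => h k, Finset.sum_range_sub]
  simp only [g]
  rw [Complex.ofReal_sin, Complex.sin]
  push_cast
  rw [show Complex.I * (((m : ℂ) - (m : ℂ) / 2) * t) = (m : ℂ) * (t / 2) * Complex.I by ring,
    show Complex.I * (((0 : ℂ) - (m : ℂ) / 2) * t) = -((m : ℂ) * (t / 2)) * Complex.I by ring]
  ring

lemma gram_entry (m : ℕ) {s : ℕ} (x : Fin s → ℝ)
    (hx : ∀ j k : Fin s, j ≠ k → Real.sin (x j / 2 - x k / 2) ≠ 0) (j l : Fin s) :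
    ∑ k, fourierMatrix m x k j * star (fourierMatrix m x k l) =
      (if j = l then (m : ℂ) else 0) +
        (Real.sin (m * (x j / 2 - x l / 2)) : ℂ) * (cscK (fun i => x i / 2) j l : ℂ) := by
  have h1 : ∀ k, fourierMatrix m x k j * star (fourierMatrix m x k l) =
      Complex.exp (Complex.I * (((((k : ℕ) : ℝ) - ((m : ℝ) - 1) / 2) * (x j - x l) : ℝ) : ℂ)) := by
    intro k
    simp only [fourierMatrix]
    rw [← starRingEnd_apply, ← Complex.exp_conj, ← Complex.exp_add]
    congr 1
    simp only [map_mul, Complex.conj_I, Complex.conj_ofReal]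
    push_cast; ring
  simp_rw [h1]
  by_cases h : j = l
  · subst h
    simp [cscK_self]
  · have hs := hx j l h
    have hd := dirichlet_kernel m (x j - x l)
    rw [sub_div (x j) (x l)] at hd
    simp only [h, if_false, zero_add, cscK]
    rw [← hd]
    have hs2 : ((Real.sin (x j / 2 - x l / 2) : ℝ) : ℂ) ≠ 0 := by exact_mod_cast hs
    rw [Complex.ofReal_inv, mul_assoc, mul_inv_cancel₀ hs2, mul_one]

lemma gram_bounds (m : ℕ) {s : ℕ} (x : Fin s → ℝ) (c : ℝ) (hc : 0 < c)
    (hz : ∀ j k : Fin s, j ≠ k → ∀ n : ℤ, c ≤ |x j / 2 - x k / 2 + π * n|) (u : Fin s → ℂ) :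
    |∑ k, ‖(fourierMatrix m x *ᵥ u) k‖ ^ 2 - m * ∑ j, ‖u j‖ ^ 2| ≤ π / c * ∑ j, ‖u j‖ ^ 2 := by
  set z : Fin s → ℝ := fun i => x i / 2 with hzd
  have hsin : ∀ j k : Fin s, j ≠ k → Real.sin (x j / 2 - x k / 2) ≠ 0 :=
    fun j k h => sin_ne_of_sep z c hc hz h
  let E : Fin s → ℂ := fun j => Complex.exp (((m : ℂ) * (z j : ℂ)) * Complex.I)
  have hE : ∀ j, star (E j) = Complex.exp (-((m : ℂ) * (z j : ℂ)) * Complex.I) := by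
    intro j
    simp only [E]
    rw [← starRingEnd_apply, ← Complex.exp_conj]
    congr 1
    simp
  have hEn : ∀ j, ‖E j‖ = 1 := by
    intro j
    simp only [E]
    rw [show (m : ℂ) * (z j : ℂ) = ((m * z j : ℝ) : ℂ) by push_cast; rfl]
    exact Complex.norm_exp_ofReal_mul_I _
  have b1 := hilbert_form z c hc hz (fun j => u j * E j)
  have b2 := hilbert_form z c hc hz (fun j => u j * star (E j))
  simp only [norm_mul, norm_star, hEn, mul_one] at b1 b2
  set Q1 := ∑ j, ∑ k, u j * E j * star (u k * E k) * (cscK z j k : ℂ) with hQ1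
  set Q2 := ∑ j, ∑ k, u j * star (E j) * star (u k * star (E k)) * (cscK z j k : ℂ) with hQ2
  have main : ((∑ k, ‖(fourierMatrix m x *ᵥ u) k‖ ^ 2 - m * ∑ j, ‖u j‖ ^ 2 : ℝ) : ℂ) =
      ((-1/2 : ℝ) : ℂ) * (Complex.I * Q1) + ((1/2 : ℝ) : ℂ) * (Complex.I * Q2) := by
    have e1 : ((∑ k, ‖(fourierMatrix m x *ᵥ u) k‖ ^ 2 : ℝ) : ℂ) =
        ∑ j, ∑ l, u j * star (u l) * ∑ k, fourierMatrix m x k j * star (fourierMatrix m x k l) := by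
      push_cast
      simp_rw [← Complex.mul_conj', starRingEnd_apply, Matrix.mulVec, dotProduct, star_sum,
        Finset.sum_mul_sum]
      rw [Finset.sum_comm]
      refine Finset.sum_congr rfl fun j _ => ?_
      rw [Finset.sum_comm]
      refine Finset.sum_congr rfl fun l _ => ?_
      rw [Finset.mul_sum]
      refine Finset.sum_congr rfl fun k _ => ?_
      rw [star_mul']
      ring
    rw [Complex.ofReal_sub, e1]
    simp_rw [gram_entry m x hsin, mul_add, Finset.sum_add_distrib]
    have e2 : ∑ j, ∑ l, u j * star (u l) * (if j = l then (m : ℂ) else 0) =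
        ((m * ∑ j, ‖u j‖ ^ 2 : ℝ) : ℂ) := by
      simp only [mul_ite, mul_zero, Finset.sum_ite_eq, Finset.mem_univ, if_true]
      push_cast
      rw [Finset.mul_sum]
      refine Finset.sum_congr rfl fun j _ => ?_
      rw [← Complex.mul_conj', starRingEnd_apply]; ring
    rw [e2, add_sub_cancel_left, hQ1, hQ2]
    simp_rw [Finset.mul_sum]
    rw [← Finset.sum_add_distrib]
    refine Finset.sum_congr rfl fun j _ => ?_
    rw [← Finset.sum_add_distrib]
    refine Finset.sum_congr rfl fun l _ => ?_
    have e3 : (Real.sin (m * (x j / 2 - x l / 2)) : ℂ) =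
        (-Complex.I / 2) * (E j * star (E l) - star (E j) * E l) := by
      rw [hE, hE]
      simp only [E]
      rw [← Complex.exp_add, ← Complex.exp_add, Complex.ofReal_sin, Complex.sin]
      simp only [hzd]
      push_cast
      rw [show -((m : ℂ) * ((x j : ℂ) / 2 - (x l : ℂ) / 2)) * Complex.I =
        -((m : ℂ) * ((x j : ℂ) / 2)) * Complex.I + (m : ℂ) * ((x l : ℂ) / 2) * Complex.I by ring,
        show ((m : ℂ) * ((x j : ℂ) / 2 - (x l : ℂ) / 2)) * Complex.I =
        ((m : ℂ) * ((x j : ℂ) / 2)) * Complex.I + -((m : ℂ) * ((x l : ℂ) / 2)) * Complex.I by ring]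
      ring
    rw [e3, star_mul', star_mul', star_star]
    push_cast
    ring
  have hre := congrArg Complex.re main
  rw [Complex.ofReal_re, Complex.add_re, Complex.re_ofReal_mul, Complex.re_ofReal_mul] at hre
  rw [hre]
  rw [abs_le] at b1 b2 ⊢
  constructor <;> linarith [b1.1, b1.2, b2.1, b2.2]

lemma toeplitz_clean (m : ℕ) {s : ℕ} (x : Fin s → ℝ) (a : Fin s → ℂ) :
    toeplitz m (cleanSamples m x a) =
      fourierMatrix m x * Matrix.diagonal a * (fourierMatrix m x)ᴴ := by
  ext j k
  rw [Matrix.mul_apply]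
  simp only [toeplitz, cleanSamples, Matrix.mul_diagonal, Matrix.conjTranspose_apply]
  refine Finset.sum_congr rfl fun l _ => ?_
  have hk := k.isLt
  have hcast : (((j : ℕ) + (m - 1) - (k : ℕ) : ℕ) : ℝ) = (j : ℕ) + ((m : ℝ) - 1) - (k : ℕ) := by
    rw [Nat.cast_sub (by omega), Nat.cast_add, Nat.cast_sub (by omega)]
    simp
  rw [hcast]
  simp only [fourierMatrix]
  rw [← starRingEnd_apply, ← Complex.exp_conj, mul_comm (Complex.exp _) (a l), mul_assoc,
    ← Complex.exp_add]
  congr 2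
  simp only [map_mul, Complex.conj_I, Complex.conj_ofReal]
  push_cast; ring

lemma cleanSamples_shift (m : ℕ) {s : ℕ} (x : Fin s → ℝ) (a : Fin s → ℂ) (n : Fin s → ℤ) :
    cleanSamples m (fun j => x j + 2 * π * n j) a = cleanSamples m x a := by
  funext k
  simp only [cleanSamples]
  refine Finset.sum_congr rfl fun l _ => ?_
  congr 1
  have : Complex.I * (((((k : ℕ) : ℝ) - ((m : ℝ) - 1)) * (x l + 2 * π * n l) : ℝ) : ℂ) =
    Complex.I * (((((k : ℕ) : ℝ) - ((m : ℝ) - 1)) * x l : ℝ) : ℂ) +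
      ((((k : ℕ) : ℤ) - ((m : ℤ) - 1)) * n l : ℤ) * (2 * π * Complex.I) := by
    push_cast; ring
  rw [this, Complex.exp_add, Complex.exp_int_mul_two_pi_mul_I, mul_one]

lemma fourier_diff (m : ℕ) {s : ℕ} (x xh : Fin s → ℝ) (k : Fin m) (l : Fin s) :
    ‖fourierMatrix m x k l - fourierMatrix m xh k l‖ ≤
      |((k : ℕ) : ℝ) - ((m : ℝ) - 1) / 2| * |x l - xh l| := by
  simp only [fourierMatrix]
  set q := ((k : ℕ) : ℝ) - ((m : ℝ) - 1) / 2
  have : Complex.exp (Complex.I * ((q * x l : ℝ) : ℂ)) - Complex.exp (Complex.I * ((q * xh l : ℝ) : ℂ))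
    = Complex.exp (Complex.I * ((q * xh l : ℝ) : ℂ)) *
      (Complex.exp (Complex.I * ((q * (x l - xh l) : ℝ) : ℂ)) - 1) := by
    rw [mul_sub, ← Complex.exp_add, mul_one]
    congr 2
    push_cast; ring
  rw [this, norm_mul, mul_comm Complex.I ((q * xh l : ℝ) : ℂ), Complex.norm_exp_ofReal_mul_I, one_mul]
  refine (Real.norm_exp_I_mul_ofReal_sub_one_le).trans ?_
  rw [Real.norm_eq_abs, abs_mul]

lemma sum_sq_freq (m : ℕ) :
    ∑ k : Fin m, (((k : ℕ) : ℝ) - ((m : ℝ) - 1) / 2) ^ 2 ≤ (m : ℝ) ^ 3 / 12 := by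
  have h : ∀ (t : ℝ) (n : ℕ), ∑ k ∈ Finset.range n, ((k : ℝ) - t) ^ 2 =
      (n : ℝ) * (n - 1) * (2 * n - 1) / 6 - t * (n * (n - 1)) + n * t ^ 2 := by
    intro t n
    induction n with
    | zero => simp
    | succ n ih => rw [Finset.sum_range_succ, ih]; push_cast; ring
  rw [Fin.sum_univ_eq_sum_range (fun k : ℕ => ((k : ℝ) - ((m : ℝ) - 1) / 2) ^ 2), h]
  have : (0:ℝ) ≤ m := Nat.cast_nonneg m
  nlinarith

/-- Euclidean norm of a complex vector. -/
def l2n {n : ℕ} (u : Fin n → ℂ) : ℝ := Real.sqrt (∑ i, ‖u i‖ ^ 2)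

lemma l2n_nonneg {n : ℕ} (u : Fin n → ℂ) : 0 ≤ l2n u := Real.sqrt_nonneg _

lemma l2n_sq {n : ℕ} (u : Fin n → ℂ) : l2n u ^ 2 = ∑ i, ‖u i‖ ^ 2 :=
  Real.sq_sqrt (Finset.sum_nonneg fun _ _ => by positivity)

lemma l2n_star {n : ℕ} (u : Fin n → ℂ) : l2n (star u) = l2n u := by
  simp [l2n]

lemma norm_le_l2n {n : ℕ} (u : Fin n → ℂ) (i : Fin n) : ‖u i‖ ≤ l2n u := by
  apply Real.le_sqrt_of_sq_le
  exact Finset.single_le_sum (f := fun i => ‖u i‖ ^ 2) (fun _ _ => by positivity)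
    (Finset.mem_univ i)

lemma cs_real {n : ℕ} (u v : Fin n → ℂ) : ∑ i, ‖u i‖ * ‖v i‖ ≤ l2n u * l2n v :=
  Real.sum_mul_le_sqrt_mul_sqrt _ _ _

lemma cs_complex {n : ℕ} (u v : Fin n → ℂ) : ‖u ⬝ᵥ v‖ ≤ l2n u * l2n v := by
  refine (norm_sum_le _ _).trans ?_
  simp_rw [norm_mul]
  exact cs_real u v

lemma l2n_eq_norm {n : ℕ} (u : Fin n → ℂ) : l2n u = ‖(WithLp.toLp 2 u : EuclideanSpace ℂ (Fin n))‖ := by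
  rw [EuclideanSpace.norm_eq]; rfl

lemma specNorm_mulVec {d e : ℕ} (M : Matrix (Fin d) (Fin e) ℂ) (u : Fin e → ℂ) :
    l2n (M *ᵥ u) ≤ specNorm M * l2n u := by
  have := (LinearMap.toContinuousLinearMap (Matrix.toEuclideanLin M)).le_opNorm (WithLp.toLp 2 u)
  rw [l2n_eq_norm, l2n_eq_norm]
  exact this

lemma dot_star_self {n : ℕ} (u : Fin n → ℂ) : u ⬝ᵥ star u = ((l2n u ^ 2 : ℝ) : ℂ) := by
  rw [l2n_sq]
  simp only [dotProduct, Pi.star_apply]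
  push_cast
  refine Finset.sum_congr rfl fun i _ => ?_
  rw [← Complex.mul_conj', starRingEnd_apply]

lemma le_of_sq_le_mul {a b : ℝ} (ha : 0 ≤ a) (hb : 0 ≤ b) (h : a ^ 2 ≤ b * a) : a ≤ b := by
  rcases eq_or_lt_of_le ha with h0 | h0
  · linarith
  · nlinarith

lemma torusDist_exists (u v : ℝ) : ∃ n : ℤ, |u + 2 * π * n - v| = torusDist u v := by
  have hpi := Real.pi_pos
  refine ⟨-round ((u - v) / (2 * π)), le_antisymm ?_ ?_⟩
  · apply le_ciInf
    intro n
    have h := round_le ((u - v) / (2 * π)) (-n)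
    have e1 : u + 2 * π * ((-round ((u - v) / (2 * π)) : ℤ) : ℝ) - v =
        (2 * π) * ((u - v) / (2 * π) - round ((u - v) / (2 * π))) := by
      push_cast; field_simp; ring
    have e2 : u - v + 2 * π * n = (2 * π) * ((u - v) / (2 * π) - ((-n : ℤ) : ℝ)) := by
      push_cast; field_simp; ring
    rw [e1, e2, abs_mul (2 * π), abs_mul (2 * π)]
    exact mul_le_mul_of_nonneg_left h (abs_nonneg _)
  · have := ciInf_le (f := fun n : ℤ => |u - v + 2 * π * n|)
      ⟨0, by rintro _ ⟨n, rfl⟩; exact abs_nonneg _⟩ (-round ((u - v) / (2 * π)))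
    refine this.trans (le_of_eq ?_)
    congr 1; ring

lemma sep_of_torus {s : ℕ} (x : Fin s → ℝ) (d : ℝ)
    (h : ∀ j k : Fin s, j ≠ k → 2 * d ≤ torusDist (x j) (x k)) (nn : Fin s → ℤ) :
    ∀ j k : Fin s, j ≠ k → ∀ n : ℤ,
      d ≤ |(x j + 2 * π * nn j) / 2 - (x k + 2 * π * nn k) / 2 + π * n| := by
  intro j k hjk n
  have h1 := h j k hjk
  have := ciInf_le (f := fun n : ℤ => |x j - x k + 2 * π * n|)
      ⟨0, by rintro _ ⟨n, rfl⟩; exact abs_nonneg _⟩ (n + nn j - nn k)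
  have h2 : 2 * d ≤ |x j - x k + 2 * π * ((n + nn j - nn k : ℤ) : ℝ)| := h1.trans this
  have e : x j - x k + 2 * π * ((n + nn j - nn k : ℤ) : ℝ) =
    2 * ((x j + 2 * π * nn j) / 2 - (x k + 2 * π * nn k) / 2 + π * n) := by push_cast; ring
  rw [e, abs_mul, abs_two] at h2
  linarith

open scoped ComplexOrder in
/-- The core estimate, with real representatives. -/
lemma core_estimate (m s : ℕ) (hm : 0 < m) (β : ℝ) (hβ : 1 < β)
    (x xh : Fin s → ℝ)
    (hx : ∀ j k : Fin s, j ≠ k → ∀ n : ℤ, π * β / m ≤ |x j / 2 - x k / 2 + π * n|)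
    (hxh : ∀ j k : Fin s, j ≠ k → ∀ n : ℤ, π * β / m ≤ |xh j / 2 - xh k / 2 + π * n|)
    (a : Fin s → ℂ) (A : ℝ) (hA : ∀ i, ‖a i‖ ≤ A)
    (ε : ℝ) (hε : ∀ i, |x i - xh i| ≤ ε)
    (N : Matrix (Fin m) (Fin m) ℂ)
    (pinv : Matrix (Fin s) (Fin m) ℂ)
    (hpinv : pinv = ((fourierMatrix m xh)ᴴ * fourierMatrix m xh)⁻¹ * (fourierMatrix m xh)ᴴ)
    (j : Fin s) :
    ‖a j - (pinv * (fourierMatrix m x * Matrix.diagonal a * (fourierMatrix m x)ᴴ + N) * pinvᴴ) j j‖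
      ≤ A * (Real.sqrt (β / (β - 1)) * (Real.sqrt s * m * ε / Real.sqrt 12))
          * (1 + Real.sqrt ((β + 1) / (β - 1)))
        + (β / (β - 1)) * specNorm N / m := by
  have hmR : (0:ℝ) < m := by exact_mod_cast hm
  have hβ0 : 0 < β := by linarith
  have hβ1 : 0 < β - 1 := by linarith
  have hε0 : 0 ≤ ε := (abs_nonneg _).trans (hε j)
  have hA0 : 0 ≤ A := (norm_nonneg _).trans (hA j)
  have hcpos : 0 < π * β / m := by have := Real.pi_pos; positivity
  have hcv : π / (π * β / m) = m / β := by have := Real.pi_pos; field_simp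
  set Φ := fourierMatrix m x with hΦ
  set Ψ := fourierMatrix m xh with hΨ
  have up : ∀ u : Fin s → ℂ, l2n (Φ *ᵥ u) ^ 2 ≤ m * ((β + 1) / β) * l2n u ^ 2 := by
    intro u
    have h := (abs_le.1 (gram_bounds m x _ hcpos hx u)).2
    rw [hcv, ← l2n_sq, ← l2n_sq] at h
    have e : m * ((β + 1) / β) * l2n u ^ 2 = m * l2n u ^ 2 + m / β * l2n u ^ 2 := by
      field_simp
    rw [e]; linarith
  have lo : ∀ u : Fin s → ℂ, m * ((β - 1) / β) * l2n u ^ 2 ≤ l2n (Ψ *ᵥ u) ^ 2 := by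
    intro u
    have h := (abs_le.1 (gram_bounds m xh _ hcpos hxh u)).1
    rw [hcv, ← l2n_sq, ← l2n_sq] at h
    have e : m * ((β - 1) / β) * l2n u ^ 2 = m * l2n u ^ 2 - m / β * l2n u ^ 2 := by
      field_simp
    rw [e]; linarith
  set κ := β / (β - 1) with hκ
  have hκ0 : 0 < κ := by positivity
  have lo' : ∀ u : Fin s → ℂ, l2n u ^ 2 ≤ κ / m * l2n (Ψ *ᵥ u) ^ 2 := by
    intro u
    have := mul_le_mul_of_nonneg_left (lo u) (show 0 ≤ κ / m by positivity)
    refine le_trans (le_of_eq ?_) this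
    rw [hκ]; field_simp
  set G := Ψᴴ * Ψ with hG
  have hGu : IsUnit G.det := by
    rw [isUnit_iff_ne_zero]
    intro h0
    obtain ⟨v, hv, hv0⟩ := Matrix.exists_mulVec_eq_zero_iff.2 h0
    have h1 : Ψ *ᵥ v = 0 := by
      rwa [hG, Matrix.conjTranspose_mul_self_mulVec_eq_zero] at hv0
    have h2 := lo' v
    rw [h1] at h2
    have h3 : l2n (0 : Fin m → ℂ) = 0 := by simp [l2n]
    rw [h3] at h2
    apply hv
    funext i
    have h4 := norm_le_l2n v i
    have h5 : l2n v = 0 := by nlinarith [l2n_nonneg v]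
    rw [h5] at h4
    simpa using h4
  have hpΨ : pinv * Ψ = 1 := by
    rw [hpinv, Matrix.mul_assoc, ← hG, Matrix.nonsing_inv_mul _ hGu]
  set p : Fin m → ℂ := pinv j with hp
  have hpl : p ᵥ* Ψ = Pi.single j 1 := by
    funext l
    have := congrFun (congrFun hpΨ j) l
    rw [Matrix.mul_apply] at this
    rw [Matrix.one_apply] at this
    simp only [Matrix.vecMul, dotProduct]
    rw [this, Pi.single_apply]
    simp [eq_comm]
  -- bound on p
  have hpn : l2n p ^ 2 ≤ κ / m := by
    let u : Fin s → ℂ := fun l => (G⁻¹)ᴴ l j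
    have hu : star p = Ψ *ᵥ u := by
      have h1 : pinvᴴ = Ψ * (G⁻¹)ᴴ := by
        rw [hpinv, Matrix.conjTranspose_mul, Matrix.conjTranspose_conjTranspose]
      funext k
      have := congrFun (congrFun h1 k) j
      rw [Matrix.conjTranspose_apply, Matrix.mul_apply] at this
      exact this
    have h1 : ((l2n p ^ 2 : ℝ) : ℂ) = u j := by
      rw [← dot_star_self, hu, Matrix.dotProduct_mulVec, hpl]
      simp
    have h2 : l2n p ^ 2 ≤ l2n u := by
      have : ‖((l2n p ^ 2 : ℝ) : ℂ)‖ = ‖u j‖ := by rw [h1]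
      rw [Complex.norm_real, Real.norm_eq_abs, abs_of_nonneg (by positivity)] at this
      rw [this]; exact norm_le_l2n u j
    have h3 := lo' u
    rw [← hu, l2n_star] at h3
    have h4 : (l2n p ^ 2) ^ 2 ≤ κ / m * l2n p ^ 2 :=
      (pow_le_pow_left₀ (by positivity) h2 2).trans h3
    exact le_of_sq_le_mul (by positivity) (by positivity) h4
  set R : Fin s → ℂ := p ᵥ* Φ with hR
  set D : Fin s → ℂ := p ᵥ* (Φ - Ψ) with hD
  have hRD : R = Pi.single j 1 + D := by
    rw [hD, Matrix.vecMul_sub, hpl, hR]; simp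
  have hRn : l2n R ≤ Real.sqrt ((β + 1) / (β - 1)) := by
    apply Real.le_sqrt_of_sq_le
    have h1 : ((l2n R ^ 2 : ℝ) : ℂ) = p ⬝ᵥ (Φ *ᵥ star R) := by
      rw [← dot_star_self, Matrix.dotProduct_mulVec]
    have h2 : l2n R ^ 2 ≤ l2n p * l2n (Φ *ᵥ star R) := by
      have : ‖((l2n R ^ 2 : ℝ) : ℂ)‖ = ‖p ⬝ᵥ (Φ *ᵥ star R)‖ := by rw [h1]
      rw [Complex.norm_real, Real.norm_eq_abs, abs_of_nonneg (by positivity)] at this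
      rw [this]; exact cs_complex _ _
    have h3 := up (star R)
    rw [l2n_star] at h3
    have h4 : (l2n R ^ 2) ^ 2 ≤ (β + 1) / (β - 1) * l2n R ^ 2 := by
      calc (l2n R ^ 2) ^ 2 ≤ (l2n p * l2n (Φ *ᵥ star R)) ^ 2 :=
            pow_le_pow_left₀ (by positivity) h2 2
        _ = l2n p ^ 2 * l2n (Φ *ᵥ star R) ^ 2 := by ring
        _ ≤ (κ / m) * (m * ((β + 1) / β) * l2n R ^ 2) := by gcongr
        _ = _ := by rw [hκ]; field_simp
    exact le_of_sq_le_mul (by positivity) (by positivity) h4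
  have hDn : l2n D ≤ Real.sqrt κ * (Real.sqrt s * m * ε / Real.sqrt 12) := by
    have h1 : ∀ l, ‖D l‖ ^ 2 ≤ (κ / m) * (ε ^ 2 * (m ^ 3 / 12)) := by
      intro l
      have h2 : ‖D l‖ ≤ l2n p * l2n (fun k => (Φ - Ψ) k l) := cs_complex _ _
      have h3 : l2n (fun k => (Φ - Ψ) k l) ^ 2 ≤ ε ^ 2 * (m ^ 3 / 12) := by
        rw [l2n_sq]
        refine le_trans (Finset.sum_le_sum (g := fun k : Fin m =>
          ε ^ 2 * (((k : ℕ) : ℝ) - ((m : ℝ) - 1) / 2) ^ 2) fun k _ => ?_) ?_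
        · have h4 := fourier_diff m x xh k l
          rw [Matrix.sub_apply, ← sq_abs (((k : ℕ) : ℝ) - _), ← mul_pow]
          refine pow_le_pow_left₀ (norm_nonneg _) (h4.trans ?_) 2
          rw [mul_comm]
          exact mul_le_mul_of_nonneg_right (hε l) (abs_nonneg _)
        · rw [← Finset.mul_sum]
          exact mul_le_mul_of_nonneg_left (sum_sq_freq m) (by positivity)
      calc ‖D l‖ ^ 2 ≤ (l2n p * l2n (fun k => (Φ - Ψ) k l)) ^ 2 :=
            pow_le_pow_left₀ (norm_nonneg _) h2 2
        _ = l2n p ^ 2 * l2n (fun k => (Φ - Ψ) k l) ^ 2 := by ring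
        _ ≤ _ := by gcongr
    have h5 : l2n D ^ 2 ≤ (Real.sqrt κ * (Real.sqrt s * m * ε / Real.sqrt 12)) ^ 2 := by
      rw [l2n_sq, mul_pow, div_pow, mul_pow, mul_pow, Real.sq_sqrt hκ0.le,
        Real.sq_sqrt (Nat.cast_nonneg s), Real.sq_sqrt (by norm_num)]
      refine (Finset.sum_le_sum fun l _ => h1 l).trans (le_of_eq ?_)
      simp only [Finset.sum_const, Finset.card_univ, Fintype.card_fin, nsmul_eq_mul]
      field_simp
    exact (sq_le_sq₀ (l2n_nonneg _) (by positivity)).1 h5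
  -- expansion
  have hexp : (pinv * (Φ * Matrix.diagonal a * Φᴴ + N) * pinvᴴ) j j =
      (∑ l, a l * (R l * star (R l))) + p ⬝ᵥ (N *ᵥ star p) := by
    rw [Matrix.mul_add, Matrix.add_mul, Matrix.add_apply]
    congr 1
    · have e : pinv * (Φ * Matrix.diagonal a * Φᴴ) * pinvᴴ =
          (pinv * Φ) * Matrix.diagonal a * (pinv * Φ)ᴴ := by
        rw [Matrix.conjTranspose_mul]; simp only [Matrix.mul_assoc]
      rw [e, Matrix.mul_apply]
      refine Finset.sum_congr rfl fun l _ => ?_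
      rw [Matrix.mul_diagonal, Matrix.conjTranspose_apply]
      have : (pinv * Φ) j l = R l := by rw [Matrix.mul_apply]; rfl
      rw [this]; ring
    · rw [Matrix.mul_assoc, Matrix.mul_apply]
      simp only [dotProduct]
      refine Finset.sum_congr rfl fun k _ => ?_
      rw [Matrix.mul_apply]
      rfl
  have hdiff : a j - (pinv * (Φ * Matrix.diagonal a * Φᴴ + N) * pinvᴴ) j j =
      -(a j * D j + ∑ l, a l * (R l * star (D l))) - p ⬝ᵥ (N *ᵥ star p) := by
    rw [hexp]
    have : ∑ l, a l * (R l * star (R l)) = a j + a j * D j + ∑ l, a l * (R l * star (D l)) := by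
      have h1 : ∀ l, a l * (R l * star (R l)) =
          (if l = j then a l + a l * D l else 0) + a l * (R l * star (D l)) := by
        intro l
        have h2 : R l = (if l = j then 1 else 0) + D l := by
          rw [hRD, Pi.add_apply, Pi.single_apply]
        have h3 : star (R l) = (if l = j then 1 else 0) + star (D l) := by
          rw [h2, star_add]; split_ifs <;> simp
        rw [h3, h2]
        split_ifs <;> ring
      simp_rw [h1, Finset.sum_add_distrib]
      simp
    rw [this]; ring
  rw [hdiff]
  have n1 : ‖a j * D j‖ ≤ A * l2n D := by
    rw [norm_mul]
    exact mul_le_mul (hA j) (norm_le_l2n D j) (norm_nonneg _) hA0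
  have n2 : ‖∑ l, a l * (R l * star (D l))‖ ≤ A * (l2n R * l2n D) := by
    refine (norm_sum_le _ _).trans ?_
    refine le_trans (Finset.sum_le_sum (g := fun l => A * (‖R l‖ * ‖D l‖)) fun l _ => ?_) ?_
    · rw [norm_mul, norm_mul, norm_star]
      exact mul_le_mul_of_nonneg_right (hA l) (by positivity)
    · rw [← Finset.mul_sum]
      exact mul_le_mul_of_nonneg_left (cs_real R D) hA0
  have n3 : ‖p ⬝ᵥ (N *ᵥ star p)‖ ≤ κ * specNorm N / m := by
    have hN0 : 0 ≤ specNorm N := norm_nonneg _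
    calc ‖p ⬝ᵥ (N *ᵥ star p)‖ ≤ l2n p * l2n (N *ᵥ star p) := cs_complex _ _
      _ ≤ l2n p * (specNorm N * l2n p) := by
          have := specNorm_mulVec N (star p)
          rw [l2n_star] at this
          exact mul_le_mul_of_nonneg_left this (l2n_nonneg _)
      _ = l2n p ^ 2 * specNorm N := by ring
      _ ≤ κ / m * specNorm N := by gcongr
      _ = _ := by ring
  have n4 : A * l2n D + A * (l2n R * l2n D) ≤
      A * (Real.sqrt κ * (Real.sqrt s * m * ε / Real.sqrt 12)) *
        (1 + Real.sqrt ((β + 1) / (β - 1))) := by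
    have : A * l2n D + A * (l2n R * l2n D) = A * l2n D * (1 + l2n R) := by ring
    rw [this]
    have := l2n_nonneg D
    have := l2n_nonneg R
    gcongr
  refine (norm_sub_le _ _).trans ?_
  rw [norm_neg]
  have := norm_add_le (a j * D j) (∑ l, a l * (R l * star (D l)))
  linarith

/-- **Amplitude estimation error for the quadratic method** (Lemma `lem:amplitudes`).
If `Δ(x) ≥ 2πβ/m` and `Δ(x̂) ≥ 2πβ/m`, `T̃ = T(y+η)`, `Φ̂ = Φ(m,x̂)`, and
`â = diag(Φ̂⁺ T̃ (Φ̂⁺)^*)`, then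
`max_j |a_j − â_j| ≤ C(β) √s a_max m max_j |x_j − x̂_j| + (β/(β−1)) ‖T(η)‖₂ / m`. -/
theorem amplitude_estimation (m s : ℕ) (hs : 1 ≤ s) (hsm : s ≤ m)
    (β : ℝ) (hβ : 1 < β)
    (x xh : Fin s → ℝ)
    (hsepx : ∀ j k : Fin s, j ≠ k → 2 * Real.pi * β / m ≤ torusDist (x j) (x k))
    (hsepxh : ∀ j k : Fin s, j ≠ k → 2 * Real.pi * β / m ≤ torusDist (xh j) (xh k))
    (a : Fin s → ℂ) (ha : ∀ j, a j ≠ 0)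
    (η : Fin (2 * m - 1) → ℂ)
    (Tt : Matrix (Fin m) (Fin m) ℂ)
    (hTt : Tt = toeplitz m (cleanSamples m x a + η))
    (pinv : Matrix (Fin s) (Fin m) ℂ)
    (hpinv : pinv = ((fourierMatrix m xh)ᴴ * fourierMatrix m xh)⁻¹ * (fourierMatrix m xh)ᴴ)
    (ah : Fin s → ℂ)
    (hah : ah = fun i => (pinv * Tt * pinvᴴ) i i)
    (Cβ : ℝ)
    (hCβ : Cβ = (1 / Real.sqrt 3) * (1 + Real.sqrt ((β + 1) / (β - 1))) *
        Real.sqrt ((β + 1) / β) * (β / (β - 1))) :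
    ∀ j, ‖a j - ah j‖ ≤
      Cβ * Real.sqrt s * (⨆ i, ‖a i‖) * m * (⨆ i, torusDist (x i) (xh i)) +
        (β / (β - 1)) * specNorm (toeplitz m η) / m := by
  subst hTt hah hCβ
  intro j
  have hm : 0 < m := lt_of_lt_of_le hs hsm
  have hmR : (0:ℝ) < m := by exact_mod_cast hm
  have hβ1 : 0 < β - 1 := by linarith
  choose n hn using fun i => torusDist_exists (x i) (xh i)
  have hx := sep_of_torus x (π * β / m)
    (fun j k h => le_trans (le_of_eq (by ring)) (hsepx j k h)) n
  have hxh := sep_of_torus xh (π * β / m)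
    (fun j k h => le_trans (le_of_eq (by ring)) (hsepxh j k h)) (fun _ => 0)
  simp only [Int.cast_zero, mul_zero, add_zero] at hxh
  set A := ⨆ i, ‖a i‖ with hAdef
  set ε := ⨆ i, torusDist (x i) (xh i) with hεdef
  have hA : ∀ i, ‖a i‖ ≤ A := fun i => le_ciSup (f := fun i => ‖a i‖) (Set.finite_range _).bddAbove i
  have hε : ∀ i, |x i + 2 * π * n i - xh i| ≤ ε := fun i => (hn i).le.trans
    (le_ciSup (f := fun i => torusDist (x i) (xh i)) (Set.finite_range _).bddAbove i)
  have hA0 : 0 ≤ A := (norm_nonneg _).trans (hA j)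
  have hε0 : 0 ≤ ε := (abs_nonneg _).trans (hε j)
  have hT : toeplitz m (cleanSamples m x a + η) =
      fourierMatrix m (fun j => x j + 2 * π * n j) * Matrix.diagonal a *
        (fourierMatrix m (fun j => x j + 2 * π * n j))ᴴ + toeplitz m η := by
    rw [← toeplitz_clean, cleanSamples_shift]; rfl
  have h := core_estimate m s hm β hβ (fun j => x j + 2 * π * n j) xh hx hxh a A hA ε hε
    (toeplitz m η) pinv hpinv j
  rw [← hT] at h
  refine h.trans ?_
  gcongr ?_ + _
  have k1 : Real.sqrt (β / (β - 1)) ≤ β / (β - 1) := by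
    rw [Real.sqrt_le_left (by positivity)]
    have : 1 ≤ β / (β - 1) := by rw [le_div_iff₀ hβ1]; linarith
    nlinarith
  have k2 : 1 ≤ Real.sqrt ((β + 1) / β) := by
    rw [Real.one_le_sqrt, le_div_iff₀ (by linarith)]; linarith
  have k3 : 1 / Real.sqrt 12 ≤ 1 / Real.sqrt 3 := by
    apply one_div_le_one_div_of_le (by positivity)
    exact Real.sqrt_le_sqrt (by norm_num)
  calc A * (Real.sqrt (β / (β - 1)) * (Real.sqrt s * m * ε / Real.sqrt 12))
          * (1 + Real.sqrt ((β + 1) / (β - 1)))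
      = (1 / Real.sqrt 12) * (1 + Real.sqrt ((β + 1) / (β - 1))) * 1 * Real.sqrt (β / (β - 1))
          * Real.sqrt s * A * m * ε := by ring
    _ ≤ _ := by gcongr
end
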